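/- Let d ≥ 1 and p, q ∈ (1,∞). Then there is a constant N = N(d) such that for every u ∈ C₀^∞(ℝ^{1+d}) and every λ > 0, ‖Du‖_{𝕃_{q,p}} ≤ N λ^{−1/2} ‖∂_t u + Δu − λ u‖_{𝕃_{q,p}}. -/

import Mathlib

open MeasureTheory Metric Set
open scoped ENNReal NNReal

noncomputable section

abbrev Spc (d : ℕ) : Type := EuclideanSpace ℝ (Fin d)

abbrev Pt (d : ℕ) : Type := ℝ × Spc d

instance matrixMeasurableSpace (d : ℕ) : MeasurableSpace (Matrix (Fin d) (Fin d) ℝ) :=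
  (inferInstance : MeasurableSpace (Fin d → Fin d → ℝ))

/-- Membership in `𝕊_δ`: symmetric `d×d` matrices with
`δ|ξ|² ≤ (aξ,ξ) ≤ δ⁻¹|ξ|²`. -/
def inS (d : ℕ) (δ : ℝ) (a : Matrix (Fin d) (Fin d) ℝ) : Prop :=
  a.IsSymm ∧ ∀ ξ : Fin d → ℝ,
    δ * (∑ i, ξ i ^ 2) ≤ (∑ i, ∑ j, a i j * ξ i * ξ j) ∧
    (∑ i, ∑ j, a i j * ξ i * ξ j) ≤ δ⁻¹ * (∑ i, ξ i ^ 2)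

/-- `{a,u} = a^{ij} a^{kr} u_{ik} u_{jr}`. -/
def bra (d : ℕ) (a u : Matrix (Fin d) (Fin d) ℝ) : ℝ :=
  ∑ i, ∑ j, ∑ k, ∑ r, a i j * a k r * u i k * u j r

/-- Frobenius norm of a `d×d` array. -/
def mnorm {d : ℕ} (m : Fin d → Fin d → ℝ) : ℝ :=
  Real.sqrt (∑ i, ∑ j, m i j ^ 2)

/-- Euclidean norm of a vector given as `Fin d → ℝ`. -/
def vnorm {d : ℕ} (v : Fin d → ℝ) : ℝ :=
  Real.sqrt (∑ i, v i ^ 2)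

/-- Parabolic cylinder `C_R(t,x) = (t, t+R²) × B_R(x)`. -/
def cyl (d : ℕ) (R t : ℝ) (x : Spc d) : Set (Pt d) :=
  Ioo t (t + R ^ 2) ×ˢ ball x R

/-- Time derivative `∂_t u`. -/
def Dt {d : ℕ} (u : Pt d → ℝ) (z : Pt d) : ℝ :=
  deriv (fun s => u (s, z.2)) z.1

/-- Spatial derivative `D_i u`. -/
def Dx {d : ℕ} (i : Fin d) (u : Pt d → ℝ) (z : Pt d) : ℝ :=
  fderiv ℝ (fun y => u (z.1, y)) z.2 (EuclideanSpace.single i 1)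

/-- Second spatial derivative `D_{ij} u = D_i D_j u`. -/
def Dxx {d : ℕ} (i j : Fin d) (u : Pt d → ℝ) : Pt d → ℝ :=
  Dx i (Dx j u)

/-- `u ∈ C₀^∞(ℝ^{1+d})`. -/
def CinfC {d : ℕ} (u : Pt d → ℝ) : Prop :=
  ContDiff ℝ (⊤ : ℕ∞) u ∧ HasCompactSupport u

/-- The kernel `p_{α,k}(s,r)`. -/
def pak (d : ℕ) (α k s r : ℝ) : ℝ :=
  if 0 < s then s ^ (-((d : ℝ) + 2 - α) / 2) * Real.exp (-(r ^ 2) / (k * s)) else 0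

/-- Parabolic distance to the origin `ρ(t,x) = |x| + √|t|`. -/
def prho {d : ℕ} (z : Pt d) : ℝ := ‖z.2‖ + Real.sqrt |z.1|

/-- Average of (the positive part of) `g` over `C`, valued in `ℝ≥0∞`. -/
def aveLin {d : ℕ} (C : Set (Pt d)) (g : Pt d → ℝ) : ℝ≥0∞ :=
  (volume C)⁻¹ * ∫⁻ z in C, ENNReal.ofReal (g z)

/-- Parabolic maximal function `𝕄_β g` (for `g ≥ 0`). -/
def maxF {d : ℕ} (β : ℝ) (g : Pt d → ℝ) (z : Pt d) : ℝ≥0∞ :=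
  ⨆ (ρ : ℝ) (_ : 0 < ρ) (t : ℝ) (x : Spc d) (_ : z ∈ cyl d ρ t x),
    ENNReal.ofReal (ρ ^ β) * aveLin (cyl d ρ t x) g

/-- Oscillation of a matrix-valued function over `C`. -/
def oscC {d : ℕ} (C : Set (Pt d)) (g : Pt d → Fin d → Fin d → ℝ) : ℝ :=
  ⨍ z₁ in C, ⨍ z₂ in C, mnorm (fun i j => g z₁ i j - g z₂ i j)

/-- Mixed norm `‖f‖_{𝕃_{q,p}}` (inner integration in `t`, outer in `x`). -/
def mixedNorm {d : ℕ} (q p : ℝ) (f : Pt d → ℝ) : ℝ :=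
  (∫ x : Spc d, (∫ t : ℝ, |f (t, x)| ^ q) ^ (p / q)) ^ (1 / p)

/-- Mixed norm on a set `Γ`. -/
def mixedNormOn {d : ℕ} (q p : ℝ) (Γ : Set (Pt d)) (f : Pt d → ℝ) : ℝ :=
  mixedNorm q p (Γ.indicator f)

/-- Normalized (averaged) mixed norm over the cylinder `C_R(t,x)`, in `ℝ≥0∞`. -/
def cylNormL {d : ℕ} (q p R t : ℝ) (x : Spc d) (f : Pt d → ℝ) : ℝ≥0∞ :=
  ((volume (ball x R))⁻¹ * ∫⁻ y in ball x R,
      ((volume (Ioo t (t + R ^ 2)))⁻¹ * ∫⁻ s in Ioo t (t + R ^ 2),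
        ENNReal.ofReal |f (s, y)| ^ q) ^ (p / q)) ^ (1 / p)

/-- Mixed norm on a set, valued in `ℝ≥0∞`. -/
def mixedNormLe {d : ℕ} (q p : ℝ) (Γ : Set (Pt d)) (f : Pt d → ℝ) : ℝ≥0∞ :=
  (∫⁻ x : Spc d, (∫⁻ t : ℝ, ENNReal.ofReal |Γ.indicator f (t, x)| ^ q) ^ (p / q)) ^ (1 / p)

/-- `ã_C(t)`: average of `a(t,·)` over the ball of the cylinder. -/
def aTilde {d : ℕ} (a : Pt d → Matrix (Fin d) (Fin d) ℝ) (R : ℝ) (x₀ : Spc d) (t : ℝ)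
    (i j : Fin d) : ℝ :=
  ⨍ y in ball x₀ R, a (t, y) i j

/-- The mean oscillation of `a` w.r.t. `x` over one cylinder. -/
def aSharpCyl {d : ℕ} (a : Pt d → Matrix (Fin d) (Fin d) ℝ) (R t₀ : ℝ) (x₀ : Spc d) : ℝ≥0∞ :=
  (volume (cyl d R t₀ x₀))⁻¹ * ∫⁻ z in cyl d R t₀ x₀,
    ENNReal.ofReal (mnorm (fun i j => a z i j - aTilde a R x₀ z.1 i j))

/-- `a^♯`. -/
def aSharp {d : ℕ} (a : Pt d → Matrix (Fin d) (Fin d) ℝ) : ℝ≥0∞ :=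
  ⨆ (R : ℝ) (_ : 0 < R) (t₀ : ℝ) (x₀ : Spc d), aSharpCyl a R t₀ x₀

/-- `a^♯_ρ` (only cylinders of radius `≤ ρa`). -/
def aSharpRho {d : ℕ} (a : Pt d → Matrix (Fin d) (Fin d) ℝ) (ρa : ℝ) : ℝ≥0∞ :=
  ⨆ (R : ℝ) (_ : 0 < R) (_ : R ≤ ρa) (t₀ : ℝ) (x₀ : Spc d), aSharpCyl a R t₀ x₀

/-- Homogeneous Morrey norm `‖g‖_{Ė_{p,β}}`. -/
def morreyP {d : ℕ} (p β : ℝ) (g : Pt d → ℝ) : ℝ≥0∞ :=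
  ⨆ (ρ : ℝ) (_ : 0 < ρ) (t : ℝ) (x : Spc d),
    ENNReal.ofReal (ρ ^ β) *
      ((volume (cyl d ρ t x))⁻¹ * ∫⁻ z in cyl d ρ t x, ENNReal.ofReal |g z| ^ p) ^ (1 / p)

/-- Homogeneous mixed-norm Morrey norm `‖g‖_{Ė_{q,p,β}}`. -/
def morreyQP {d : ℕ} (q p β : ℝ) (g : Pt d → ℝ) : ℝ≥0∞ :=
  ⨆ (ρ : ℝ) (_ : 0 < ρ) (t : ℝ) (x : Spc d),
    ENNReal.ofReal (ρ ^ β) * cylNormL q p ρ t x g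

/-- Inhomogeneous mixed-norm Morrey norm `‖g‖_{E_{q,p,β}}` (radii `ρ ∈ (0,1]`). -/
def morreyI {d : ℕ} (q p β : ℝ) (g : Pt d → ℝ) : ℝ≥0∞ :=
  ⨆ (ρ : ℝ) (_ : 0 < ρ) (_ : ρ ≤ 1) (t : ℝ) (x : Spc d),
    ENNReal.ofReal (ρ ^ β) * cylNormL q p ρ t x g

/-- `b̄_{q',p',ρb}` for a vector field `b`. -/
def bBar {d : ℕ} (q' p' : ℝ) (b : Pt d → Fin d → ℝ) (ρb : ℝ) : ℝ≥0∞ :=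
  ⨆ (R : ℝ) (_ : 0 < R) (_ : R ≤ ρb) (t : ℝ) (x : Spc d),
    ENNReal.ofReal R * cylNormL q' p' R t x (fun z => vnorm (b z))

/-- Test function supported in the open set `Q`. -/
def IsTest {d : ℕ} (Q : Set (Pt d)) (φ : Pt d → ℝ) : Prop :=
  ContDiff ℝ (⊤ : ℕ∞) φ ∧ HasCompactSupport φ ∧ tsupport φ ⊆ Q

/-- `ut` is the weak time derivative of `u` on `Q`. -/
def WeakDtOn {d : ℕ} (Q : Set (Pt d)) (u ut : Pt d → ℝ) : Prop :=
  ∀ φ, IsTest Q φ → ∫ z in Q, u z * Dt φ z = - ∫ z in Q, ut z * φ z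

/-- `ui` is the weak `i`-th spatial derivative of `u` on `Q`. -/
def WeakDxOn {d : ℕ} (Q : Set (Pt d)) (i : Fin d) (u ui : Pt d → ℝ) : Prop :=
  ∀ φ, IsTest Q φ → ∫ z in Q, u z * Dx i φ z = - ∫ z in Q, ui z * φ z

/-!
Let `ξ` be a standard Gaussian vector and `L = ∂ₜ + Δ - λ`. Along the parabolas
`r ↦ z + (r² / 2, r ξ)`, Gaussian integration by parts (Stein's identity) turns the radial
derivative into the heat operator,
`d/dr [exp (-λ r² / 2) 𝔼 U(z + (r² / 2, r ξ))] = r exp (-λ r² / 2) 𝔼 LU(z + (r² / 2, r ξ))`,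
so that `U(z) = -∫₀^∞ r exp (-λ r² / 2) 𝔼 LU(z + (r² / 2, r ξ)) dr`. For `U = D_v u` a second use
of Stein's identity moves `D_v` from `Lu` onto the Gaussian:
`D_v u(z) = -∫₀^∞ exp (-λ r² / 2) 𝔼 ⟨ξ, v⟩ Lu(z + (r² / 2, r ξ)) dr`.
Hence `|Du|` is dominated by an average of translates of `|Lu|` against a measure of total mass at
most `√(π d / (2 λ))`, and Minkowski's integral inequality bounds it in every translation-invariant
mixed norm.
-/

open ProbabilityTheory Filter
open scoped InnerProductSpace Topology

section Minkowski

variable {X Ω : Type*} [MeasurableSpace X] [MeasurableSpace Ω] {μ : Measure X} {ν : Measure Ω}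
  {q : ℝ}

theorem lintegral_rpow_le_lintegral_mul_rpow (hq : 1 ≤ q) {f b : Ω → ℝ≥0∞}
    (hf : AEMeasurable f ν) (hb : AEMeasurable b ν) (hb0 : ∀ᵐ ω ∂ν, b ω ≠ 0)
    (hb_top : ∀ᵐ ω ∂ν, b ω ≠ ∞) :
    (∫⁻ ω, f ω ∂ν) ^ q ≤ (∫⁻ ω, f ω ^ q * b ω ^ (1 - q) ∂ν) * (∫⁻ ω, b ω ∂ν) ^ (q - 1) := by
  have hq0 : 0 < q := by linarith
  have split : ∀ᵐ ω ∂ν, f ω = (f ω ^ q * b ω ^ (1 - q)) ^ q⁻¹ * b ω ^ (1 - q⁻¹) := by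
    filter_upwards [hb0, hb_top] with ω h0 htop
    rw [ENNReal.mul_rpow_of_nonneg _ _ (inv_nonneg.2 hq0.le), ← ENNReal.rpow_mul,
      ← ENNReal.rpow_mul, mul_inv_cancel₀ hq0.ne', ENNReal.rpow_one, mul_assoc,
      ← ENNReal.rpow_add _ _ h0 htop, show (1 - q) * q⁻¹ + (1 - q⁻¹) = 0 by field_simp; ring,
      ENNReal.rpow_zero, mul_one]
  have holder := ENNReal.lintegral_mul_norm_pow_le
    ((hf.pow_const q).mul (hb.pow_const (1 - q))) hb (inv_nonneg.2 hq0.le)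
    (sub_nonneg.2 (inv_le_one_of_one_le₀ hq)) (add_sub_cancel q⁻¹ 1)
  calc (∫⁻ ω, f ω ∂ν) ^ q
    _ ≤ ((∫⁻ ω, f ω ^ q * b ω ^ (1 - q) ∂ν) ^ q⁻¹ * (∫⁻ ω, b ω ∂ν) ^ (1 - q⁻¹)) ^ q := by
        rw [lintegral_congr_ae split]
        exact ENNReal.rpow_le_rpow holder hq0.le
    _ = (∫⁻ ω, f ω ^ q * b ω ^ (1 - q) ∂ν) * (∫⁻ ω, b ω ∂ν) ^ (q - 1) := by
        rw [ENNReal.mul_rpow_of_nonneg _ _ hq0.le, ENNReal.rpow_inv_rpow hq0.ne',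
          ← ENNReal.rpow_mul, sub_mul, one_mul, inv_mul_cancel₀ hq0.ne']

theorem lintegral_rpow_lintegral_le_of_forall_le [SFinite μ] [SFinite ν] (hq : 1 ≤ q)
    {h : X → Ω → ℝ≥0∞} (hh : Measurable (Function.uncurry h)) {b : Ω → ℝ≥0∞} (hb : Measurable b)
    (hb0 : ∀ᵐ ω ∂ν, b ω ≠ 0) (hb_top : ∀ᵐ ω ∂ν, b ω ≠ ∞)
    (hle : ∀ ω, ∫⁻ x, h x ω ^ q ∂μ ≤ b ω ^ q) :
    ∫⁻ x, (∫⁻ ω, h x ω ∂ν) ^ q ∂μ ≤ (∫⁻ ω, b ω ∂ν) ^ q := by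
  have hhq : Measurable fun z : X × Ω => h z.1 z.2 ^ q * b z.2 ^ (1 - q) :=
    (hh.pow_const q).mul ((hb.comp measurable_snd).pow_const _)
  calc ∫⁻ x, (∫⁻ ω, h x ω ∂ν) ^ q ∂μ
    _ ≤ ∫⁻ x, (∫⁻ ω, h x ω ^ q * b ω ^ (1 - q) ∂ν) * (∫⁻ ω, b ω ∂ν) ^ (q - 1) ∂μ :=
        lintegral_mono fun x => lintegral_rpow_le_lintegral_mul_rpow hq
          (hh.comp measurable_prodMk_left).aemeasurable hb.aemeasurable hb0 hb_top
    _ = (∫⁻ ω, (∫⁻ x, h x ω ^ q ∂μ) * b ω ^ (1 - q) ∂ν) * (∫⁻ ω, b ω ∂ν) ^ (q - 1) := by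
        rw [lintegral_mul_const _ hhq.lintegral_prod_right,
          lintegral_lintegral_swap hhq.aemeasurable]
        congr 1
        exact lintegral_congr fun ω =>
          lintegral_mul_const _ ((hh.comp measurable_prodMk_right).pow_const q)
    _ ≤ (∫⁻ ω, b ω ∂ν) * (∫⁻ ω, b ω ∂ν) ^ (q - 1) := by
        gcongr ?_ * _
        refine lintegral_mono_ae ?_
        filter_upwards [hb0, hb_top] with ω h0 htop
        calc (∫⁻ x, h x ω ^ q ∂μ) * b ω ^ (1 - q) ≤ b ω ^ q * b ω ^ (1 - q) := by
              gcongr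
              exact hle ω
          _ = b ω := by rw [← ENNReal.rpow_add _ _ h0 htop, add_sub_cancel, ENNReal.rpow_one]
    _ = (∫⁻ ω, b ω ∂ν) ^ q := by
        conv_rhs => rw [← add_sub_cancel 1 q, ENNReal.rpow_add_of_nonneg _ _ zero_le_one
          (sub_nonneg.2 hq), ENNReal.rpow_one]

theorem rpow_lintegral_rpow_lintegral_le [SFinite μ] [SigmaFinite ν] (hq : 1 ≤ q)
    {h : X → Ω → ℝ≥0∞} (hh : Measurable (Function.uncurry h)) :
    (∫⁻ x, (∫⁻ ω, h x ω ∂ν) ^ q ∂μ) ^ (1 / q) ≤ ∫⁻ ω, (∫⁻ x, h x ω ^ q ∂μ) ^ (1 / q) ∂ν := by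
  have hq0 : 0 < q := by linarith
  set a : Ω → ℝ≥0∞ := fun ω => (∫⁻ x, h x ω ^ q ∂μ) ^ (1 / q)
  have ha : Measurable a := (hh.pow_const q).lintegral_prod_left'.pow_const _
  refine ENNReal.le_of_forall_pos_le_add fun ε hε a_lt_top => ?_
  -- Where `a` vanishes it is no admissible Hölder weight, so a small positive `w` is added to it.
  obtain ⟨w, w_pos, hw, w_lt⟩ :=
    exists_pos_lintegral_lt_of_sigmaFinite ν (ENNReal.coe_pos.2 hε).ne'
  have hb : Measurable fun ω => a ω + w ω := ha.add hw.coe_nnreal_ennreal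
  have hb_top : ∀ᵐ ω ∂ν, a ω + w ω ≠ ∞ := by
    filter_upwards [ae_lt_top ha a_lt_top.ne] with ω hω
    exact ENNReal.add_ne_top.2 ⟨hω.ne, ENNReal.coe_ne_top⟩
  have hb0 (ω : Ω) : a ω + w ω ≠ 0 := by simp [(w_pos ω).ne']
  have hle (ω : Ω) : ∫⁻ x, h x ω ^ q ∂μ ≤ (a ω + w ω) ^ q := by
    rw [← ENNReal.rpow_inv_le_iff hq0, ← one_div]
    exact le_self_add
  calc (∫⁻ x, (∫⁻ ω, h x ω ∂ν) ^ q ∂μ) ^ (1 / q) ≤ ∫⁻ ω, a ω + w ω ∂ν := by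
        rw [one_div, ENNReal.rpow_inv_le_iff hq0]
        exact lintegral_rpow_lintegral_le_of_forall_le hq hh hb (.of_forall hb0) hb_top hle
    _ ≤ ∫⁻ ω, a ω ∂ν + ε := by
        rw [lintegral_add_left ha]
        gcongr

end Minkowski

section MixedNorm

variable {T X : Type*} [MeasurableSpace T] [MeasurableSpace X] {μ : Measure T} {ν : Measure X}
  {q p : ℝ}

/-- The extended-real mixed norm on `T × X`: the `L^q(μ)` norm in the first variable, followed by
the `L^p(ν)` norm in the second one. -/
def eMixedNorm (μ : Measure T) (ν : Measure X) (q p : ℝ) (h : T × X → ℝ≥0∞) : ℝ≥0∞ :=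
  (∫⁻ x, ((∫⁻ t, h (t, x) ^ q ∂μ) ^ (1 / q)) ^ p ∂ν) ^ (1 / p)

theorem eMixedNorm_le_of_le_lintegral_translate [AddGroup T] [AddGroup X] [MeasurableAdd₂ T]
    [MeasurableAdd₂ X] [SFinite μ] [SFinite ν] [μ.IsAddRightInvariant] [ν.IsAddRightInvariant]
    (hq : 1 ≤ q) (hp : 1 ≤ p) {κ : Measure (T × X)} [SigmaFinite κ] {F h : T × X → ℝ≥0∞}
    (hh : Measurable h) (hF : ∀ z, F z ≤ ∫⁻ w, h (z + w) ∂κ) :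
    eMixedNorm μ ν q p F ≤ κ univ * eMixedNorm μ ν q p h := by
  have : 0 ≤ q := by linarith
  have : 0 ≤ p := by linarith
  set M : X → ℝ≥0∞ := fun x => (∫⁻ t, h (t, x) ^ q ∂μ) ^ (1 / q)
  have hM : Measurable M := (hh.pow_const q).lintegral_prod_left'.pow_const _
  have inner_le (x : X) : (∫⁻ t, F (t, x) ^ q ∂μ) ^ (1 / q) ≤ ∫⁻ w, M (x + w.2) ∂κ :=
    calc (∫⁻ t, F (t, x) ^ q ∂μ) ^ (1 / q)
      _ ≤ (∫⁻ t, (∫⁻ w, h ((t, x) + w) ∂κ) ^ q ∂μ) ^ (1 / q) := by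
          gcongr
          exact hF _
      _ ≤ ∫⁻ w, (∫⁻ t, h ((t, x) + w) ^ q ∂μ) ^ (1 / q) ∂κ :=
          rpow_lintegral_rpow_lintegral_le hq
            (hh.comp (f := fun a : T × T × X => (a.1 + a.2.1, x + a.2.2)) (by fun_prop))
      _ = ∫⁻ w, M (x + w.2) ∂κ := lintegral_congr fun w => congrArg (· ^ (1 / q))
          (lintegral_add_right_eq_self (fun t => h (t, x + w.2) ^ q) w.1)
  calc eMixedNorm μ ν q p F ≤ (∫⁻ x, (∫⁻ w, M (x + w.2) ∂κ) ^ p ∂ν) ^ (1 / p) := by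
        unfold eMixedNorm
        gcongr
        exact inner_le _
    _ ≤ ∫⁻ w, (∫⁻ x, M (x + w.2) ^ p ∂ν) ^ (1 / p) ∂κ :=
        rpow_lintegral_rpow_lintegral_le hp (hM.comp (by fun_prop))
    _ = ∫⁻ _, eMixedNorm μ ν q p h ∂κ := lintegral_congr fun w => congrArg (· ^ (1 / p))
        (lintegral_add_right_eq_self (fun x => M x ^ p) w.2)
    _ = κ univ * eMixedNorm μ ν q p h := by rw [lintegral_const, mul_comm]

end MixedNorm

section MixedNormOfContinuous

theorem ofReal_integral_abs_rpow {X : Type*} [TopologicalSpace X] [MeasurableSpace X]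
    [OpensMeasurableSpace X] {μ : Measure X} [IsFiniteMeasureOnCompacts μ] {f : X → ℝ}
    (hf : Continuous f) (hfc : HasCompactSupport f) {r : ℝ} (hr : 0 < r) :
    ENNReal.ofReal (∫ x, |f x| ^ r ∂μ) = ∫⁻ x, ‖f x‖ₑ ^ r ∂μ := by
  have integrable_rpow : Integrable (fun x => |f x| ^ r) μ :=
    (hf.abs.rpow_const fun _ => .inr hr.le).integrable_of_hasCompactSupport
      (hfc.comp_left (g := fun y => |y| ^ r) (by simp [hr.ne']))
  rw [ofReal_integral_eq_lintegral_ofReal integrable_rpow (.of_forall fun x => by positivity)]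
  refine lintegral_congr fun x => ?_
  rw [Real.enorm_eq_ofReal_abs, ENNReal.ofReal_rpow_of_nonneg (abs_nonneg _) hr.le]

variable {T X : Type*} [TopologicalSpace T] [TopologicalSpace X] [MeasurableSpace T]
  {μ : Measure T} {f : T × X → ℝ}

theorem continuous_integral_fst_of_hasCompactSupport [OpensMeasurableSpace T]
    [IsFiniteMeasureOnCompacts μ] (hf : Continuous f) (hfc : HasCompactSupport f) :
    Continuous fun x => ∫ t, f (t, x) ∂μ := by
  rw [← continuousOn_univ]
  refine continuousOn_integral_of_compact_support (f := fun x t => f (t, x))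
    (hfc.isCompact.image continuous_fst) (hf.comp continuous_swap).continuousOn ?_
  exact fun x t _ ht => image_eq_zero_of_notMem_tsupport fun h => ht ⟨_, h, rfl⟩

theorem hasCompactSupport_integral_fst [R1Space X] (hfc : HasCompactSupport f) :
    HasCompactSupport fun x => ∫ t, f (t, x) ∂μ := by
  refine .intro (hfc.isCompact.image continuous_snd) fun x hx => ?_
  have slice_eq_zero (t : T) : f (t, x) = 0 :=
    image_eq_zero_of_notMem_tsupport fun h => hx ⟨_, h, rfl⟩
  simp [slice_eq_zero]

theorem ofReal_mixedNorm {d : ℕ} {f : Pt d → ℝ} (hf : Continuous f) (hfc : HasCompactSupport f)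
    {q p : ℝ} (hq : 0 < q) (hp : 0 < p) :
    ENNReal.ofReal (mixedNorm q p f) = eMixedNorm volume volume q p fun z => ‖f z‖ₑ := by
  set G : Spc d → ℝ := fun x => (∫ t, |f (t, x)| ^ q) ^ (1 / q)
  have integral_nonneg (x : Spc d) : 0 ≤ ∫ t, |f (t, x)| ^ q := by positivity
  have hfq : Continuous fun z => |f z| ^ q := hf.abs.rpow_const fun _ => .inr hq.le
  have hfqc : HasCompactSupport fun z => |f z| ^ q :=
    hfc.comp_left (g := fun y => |y| ^ q) (by simp [hq.ne'])
  have hG : Continuous G := (continuous_integral_fst_of_hasCompactSupport hfq hfqc).rpow_const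
    fun _ => .inr (by positivity)
  have hGc : HasCompactSupport G := (hasCompactSupport_integral_fst hfqc).comp_left
    (g := fun y : ℝ => y ^ (1 / q)) (Real.zero_rpow (by positivity))
  have slice_hasCompactSupport (x : Spc d) : HasCompactSupport fun t => f (t, x) :=
    .intro (hfc.isCompact.image continuous_fst) fun t ht =>
      image_eq_zero_of_notMem_tsupport fun h => ht ⟨_, h, rfl⟩
  have enorm_G (x : Spc d) : ‖G x‖ₑ = (∫⁻ t, ‖f (t, x)‖ₑ ^ q) ^ (1 / q) := by
    rw [Real.enorm_eq_ofReal (by positivity), ← ofReal_integral_abs_rpow (by fun_prop)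
      (slice_hasCompactSupport x) hq,
      ENNReal.ofReal_rpow_of_nonneg (integral_nonneg x) (by positivity)]
  have mixedNorm_eq : mixedNorm q p f = (∫ x, |G x| ^ p) ^ (1 / p) := by
    refine congrArg (· ^ (1 / p)) (integral_congr_ae (.of_forall fun x => ?_))
    dsimp only [G]
    rw [abs_of_nonneg (by positivity), ← Real.rpow_mul (integral_nonneg x), one_div_mul_eq_div]
  rw [mixedNorm_eq, ← ENNReal.ofReal_rpow_of_nonneg (by positivity) (by positivity),
    ofReal_integral_abs_rpow hG hGc hp]
  simp only [enorm_G, eMixedNorm]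

theorem mixedNorm_nonneg {d : ℕ} (q p : ℝ) (f : Pt d → ℝ) : 0 ≤ mixedNorm q p f := by
  unfold mixedNorm
  positivity

end MixedNormOfContinuous

section Gaussian

variable {E : Type*} [NormedAddCommGroup E] [InnerProductSpace ℝ E]

/-- The Lebesgue density of the standard Gaussian measure on `E`. -/
def stdGaussianPDFReal (z : E) : ℝ :=
  (2 * Real.pi) ^ (-(Module.finrank ℝ E / 2 : ℝ)) * Real.exp (-(1 / 2) * ‖z‖ ^ 2)

theorem stdGaussianPDFReal_nonneg (z : E) : 0 ≤ stdGaussianPDFReal z := by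
  unfold stdGaussianPDFReal
  positivity

theorem hasFDerivAt_stdGaussianPDFReal (z : E) :
    HasFDerivAt stdGaussianPDFReal (-stdGaussianPDFReal z • innerSL ℝ z) z := by
  have h := (((hasStrictFDerivAt_norm_sq z).hasFDerivAt.const_mul (-(1 / 2))).exp).const_mul
    ((2 * Real.pi) ^ (-(Module.finrank ℝ E / 2 : ℝ)))
  refine h.congr_fderiv ?_
  ext v
  simp only [stdGaussianPDFReal, neg_smul, smul_neg, neg_apply, smul_apply,
    innerSL_apply_apply, smul_eq_mul, nsmul_eq_mul, Nat.cast_ofNat]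
  ring

variable [FiniteDimensional ℝ E] [MeasurableSpace E] [BorelSpace E]

theorem integrable_stdGaussianPDFReal : Integrable (stdGaussianPDFReal : E → ℝ) := by
  refine Integrable.const_mul (.of_integral_ne_zero ?_) _
  rw [GaussianFourier.integral_rexp_neg_mul_sq_norm (by norm_num)]
  positivity

theorem stdGaussian_eq_withDensity :
    stdGaussian E = volume.withDensity fun z => ENNReal.ofReal (stdGaussianPDFReal z) := by
  have := isFiniteMeasure_withDensity_ofReal (integrable_stdGaussianPDFReal (E := E)).2
  refine Measure.ext_of_charFun (funext fun w => ?_)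
  have integrand_eq (z : E) : (ENNReal.ofReal (stdGaussianPDFReal z)).toReal •
      Complex.exp (⟪z, w⟫_ℝ * Complex.I) =
        ((2 * Real.pi : ℝ) : ℂ) ^ (-(Module.finrank ℝ E / 2 : ℂ)) *
          Complex.exp (-(1 / 2) * ‖z‖ ^ 2 + Complex.I * ⟪w, z⟫_ℝ) := by
    rw [ENNReal.toReal_ofReal (stdGaussianPDFReal_nonneg z), stdGaussianPDFReal, real_inner_comm,
      Complex.real_smul, Complex.exp_add]
    push_cast [Complex.ofReal_cpow (show 0 ≤ 2 * Real.pi by positivity)]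
    ring_nf
  rw [charFun_stdGaussian, charFun_apply, integral_withDensity_eq_integral_toReal_smul
    (by unfold stdGaussianPDFReal; fun_prop) (by simp)]
  simp_rw [integrand_eq]
  rw [integral_const_mul, GaussianFourier.integral_cexp_neg_mul_sq_norm_add (by norm_num)]
  have two_pi_eq : (Real.pi : ℂ) / (1 / 2) = ((2 * Real.pi : ℝ) : ℂ) := by
    push_cast
    ring
  rw [two_pi_eq, Complex.cpow_neg, inv_mul_cancel_left₀]
  · congr 1
    rw [Complex.I_sq]
    ring
  · simp [Complex.cpow_eq_zero_iff, Real.pi_ne_zero]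

theorem integral_stdGaussian (f : E → ℝ) :
    ∫ z, f z ∂stdGaussian E = ∫ z, stdGaussianPDFReal z * f z := by
  rw [stdGaussian_eq_withDensity, integral_withDensity_eq_integral_toReal_smul
    (by unfold stdGaussianPDFReal; fun_prop) (by simp)]
  simp only [ENNReal.toReal_ofReal (stdGaussianPDFReal_nonneg _), smul_eq_mul]

theorem integrable_stdGaussian_iff {f : E → ℝ} :
    Integrable f (stdGaussian E) ↔ Integrable fun z => stdGaussianPDFReal z * f z := by
  rw [stdGaussian_eq_withDensity, integrable_withDensity_iff_integrable_smul'
    (by unfold stdGaussianPDFReal; fun_prop) (by simp)]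
  simp only [ENNReal.toReal_ofReal (stdGaussianPDFReal_nonneg _), smul_eq_mul]

theorem integral_fderiv_stdGaussian {f : E → ℝ} {v : E} (hf : Differentiable ℝ f)
    (hf_int : Integrable f (stdGaussian E))
    (hf'_int : Integrable (fun z => fderiv ℝ f z v) (stdGaussian E))
    (hvf_int : Integrable (fun z => ⟪z, v⟫_ℝ * f z) (stdGaussian E)) :
    ∫ z, fderiv ℝ f z v ∂stdGaussian E = ∫ z, ⟪z, v⟫_ℝ * f z ∂stdGaussian E := by
  have fderiv_pdf_mul (z : E) : fderiv ℝ stdGaussianPDFReal z v * f z =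
      -(stdGaussianPDFReal z * (⟪z, v⟫_ℝ * f z)) := by
    rw [(hasFDerivAt_stdGaussianPDFReal z).fderiv]
    simp only [neg_smul, neg_apply, smul_apply, innerSL_apply_apply, smul_eq_mul]
    ring
  rw [integral_stdGaussian, integral_stdGaussian,
    integral_mul_fderiv_eq_neg_fderiv_mul_of_integrable]
  · simp only [fderiv_pdf_mul, integral_neg, neg_neg]
  · simpa only [fderiv_pdf_mul] using (integrable_stdGaussian_iff.1 hvf_int).fun_neg
  · exact integrable_stdGaussian_iff.1 hf'_int
  · exact integrable_stdGaussian_iff.1 hf_int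
  · exact fun z _ => (hasFDerivAt_stdGaussianPDFReal z).differentiableAt
  · exact fun z _ => hf z

theorem integral_inner_sq_stdGaussian (v : E) :
    ∫ z, ⟪v, z⟫_ℝ ^ 2 ∂stdGaussian E = ‖v‖ ^ 2 := by
  have h := variance_dual_stdGaussian (innerSL ℝ v)
  rw [variance_of_integral_eq_zero (by fun_prop) (integral_strongDual_stdGaussian _)] at h
  simpa using h

theorem integral_norm_sq_stdGaussian :
    ∫ z : E, ‖z‖ ^ 2 ∂stdGaussian E = Module.finrank ℝ E := by
  let b := stdOrthonormalBasis ℝ E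
  have integrable_inner_sq (i) : Integrable (fun z => ⟪b i, z⟫_ℝ ^ 2) (stdGaussian E) :=
    (IsGaussian.memLp_dual (stdGaussian E) (innerSL ℝ (b i)) 2 (by simp)).integrable_sq
  simp only [← b.sum_sq_inner_right, integral_finsetSum _ fun i _ => integrable_inner_sq i,
    integral_inner_sq_stdGaussian, b.norm_eq_one, one_pow, Finset.sum_const, Finset.card_univ,
    Fintype.card_fin, nsmul_one]

theorem integral_norm_stdGaussian_le :
    ∫ z : E, ‖z‖ ∂stdGaussian E ≤ √(Module.finrank ℝ E) := by
  refine Real.le_sqrt_of_sq_le ?_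
  have variance_eq := variance_eq_sub (IsGaussian.memLp_two_id (μ := stdGaussian E)).norm
  have := variance_nonneg (fun z => ‖z‖) (stdGaussian E)
  simp only [← integral_norm_sq_stdGaussian]
  simp only [id_eq, Pi.pow_apply] at variance_eq
  linarith

end Gaussian

section DirDeriv

variable {V : Type*} [NormedAddCommGroup V] [NormedSpace ℝ V] {u f g : V → ℝ}

/-- The derivative of `u` in the direction `w`, as a function of the point. -/
def dirDeriv (w : V) (u : V → ℝ) (z : V) : ℝ :=
  fderiv ℝ u z w

theorem contDiff_dirDeriv {m n : WithTop ℕ∞} (hu : ContDiff ℝ n u) (hmn : m + 1 ≤ n) (w : V) :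
    ContDiff ℝ m (dirDeriv w u) :=
  (hu.fderiv_right hmn).clm_apply contDiff_const

theorem hasCompactSupport_dirDeriv (hu : HasCompactSupport u) (w : V) :
    HasCompactSupport (dirDeriv w u) :=
  hu.fderiv_apply ℝ w

theorem dirDeriv_add (hf : Differentiable ℝ f) (hg : Differentiable ℝ g) (w : V) :
    dirDeriv w (f + g) = dirDeriv w f + dirDeriv w g := by
  funext z
  simp [dirDeriv, fderiv_add (hf z) (hg z)]

theorem dirDeriv_sub (hf : Differentiable ℝ f) (hg : Differentiable ℝ g) (w : V) :
    dirDeriv w (f - g) = dirDeriv w f - dirDeriv w g := by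
  funext z
  simp [dirDeriv, fderiv_sub (hf z) (hg z)]

theorem dirDeriv_const_smul (hf : Differentiable ℝ f) (c : ℝ) (w : V) :
    dirDeriv w (c • f) = c • dirDeriv w f := by
  funext z
  simp [dirDeriv, fderiv_const_smul (hf z) c]

theorem dirDeriv_sum {ι : Type*} {s : Finset ι} {f : ι → V → ℝ}
    (hf : ∀ i ∈ s, Differentiable ℝ (f i)) (w : V) :
    dirDeriv w (∑ i ∈ s, f i) = ∑ i ∈ s, dirDeriv w (f i) := by
  funext z
  simp [dirDeriv, fderiv_sum fun i hi => hf i hi z]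

theorem dirDeriv_comm (hu : ContDiff ℝ 2 u) (v w : V) :
    dirDeriv v (dirDeriv w u) = dirDeriv w (dirDeriv v u) := by
  have dirDeriv_dirDeriv (v w z : V) :
      dirDeriv v (dirDeriv w u) z = fderiv ℝ (fderiv ℝ u) z v w := by
    have hd : DifferentiableAt ℝ (fderiv ℝ u) z :=
      (hu.fderiv_right (m := 1) one_add_one_eq_two.le).differentiable one_ne_zero z
    change fderiv ℝ (fun y => fderiv ℝ u y w) z v = _
    simp [fderiv_clm_apply hd (differentiableAt_const w)]
  funext z
  rw [dirDeriv_dirDeriv, dirDeriv_dirDeriv]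
  exact hu.contDiffAt.isSymmSndFDerivAt (by simp) v w

end DirDeriv

section SpatialGradient

variable {F E : Type*} [NormedAddCommGroup F] [NormedSpace ℝ F] [NormedAddCommGroup E]
  [NormedSpace ℝ E] {u : F × E → ℝ}

theorem continuous_norm_fderiv_comp_inr (hu : ContDiff ℝ 1 u) :
    Continuous fun z => ‖(fderiv ℝ u z).comp (.inr ℝ F E)‖ :=
  ((hu.continuous_fderiv one_ne_zero).clm_comp continuous_const).norm

theorem hasCompactSupport_norm_fderiv_comp_inr (hu : HasCompactSupport u) :
    HasCompactSupport fun z => ‖(fderiv ℝ u z).comp (.inr ℝ F E)‖ :=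
  .intro hu.isCompact fun z hz => by
    rw [fderiv_of_notMem_tsupport ℝ hz, ContinuousLinearMap.zero_comp, norm_zero]

end SpatialGradient

section BackwardHeatOp

variable {E : Type*} [NormedAddCommGroup E] [InnerProductSpace ℝ E]
  {ι : Type*} [Fintype ι] (b : OrthonormalBasis ι ℝ E) {u : ℝ × E → ℝ}

/-- The backward heat operator `∂ₜ + Δ` on `ℝ × E`, the Laplacian being computed in the orthonormal
basis `b`. -/
def backwardHeatOp (u : ℝ × E → ℝ) : ℝ × E → ℝ :=
  dirDeriv (1, 0) u + ∑ i, dirDeriv (0, b i) (dirDeriv (0, b i) u)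

theorem contDiff_backwardHeatOp {m n : WithTop ℕ∞} (hu : ContDiff ℝ n u) (hmn : m + 1 + 1 ≤ n) :
    ContDiff ℝ m (backwardHeatOp b u) := by
  refine (contDiff_dirDeriv hu (le_self_add.trans hmn) _).add ?_
  rw [Finset.sum_fn]
  exact .sum fun i _ => contDiff_dirDeriv (contDiff_dirDeriv hu hmn _) le_rfl _

theorem hasCompactSupport_backwardHeatOp (hu : HasCompactSupport u) :
    HasCompactSupport (backwardHeatOp b u) := by
  refine (hasCompactSupport_dirDeriv hu _).add
    (Finset.sum_induction _ HasCompactSupport (fun _ _ => .add) .zero fun i _ => ?_)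
  exact hasCompactSupport_dirDeriv (hasCompactSupport_dirDeriv hu _) _

theorem contDiff_backwardHeatOp_sub_smul {m n : WithTop ℕ∞} (hu : ContDiff ℝ n u)
    (hmn : m + 1 + 1 ≤ n) (lam : ℝ) : ContDiff ℝ m (backwardHeatOp b u - lam • u) :=
  (contDiff_backwardHeatOp b hu hmn).sub
    (contDiff_const.smul (hu.of_le (le_self_add.trans (le_self_add.trans hmn))))

theorem hasCompactSupport_backwardHeatOp_sub_smul (hu : HasCompactSupport u) (lam : ℝ) :
    HasCompactSupport (backwardHeatOp b u - lam • u) :=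
  (hasCompactSupport_backwardHeatOp b hu).sub (hu.smul_left (f := fun _ => lam))

theorem dirDeriv_backwardHeatOp (hu : ContDiff ℝ 3 u) (w : ℝ × E) :
    dirDeriv w (backwardHeatOp b u) = backwardHeatOp b (dirDeriv w u) := by
  have hu₂ (v : ℝ × E) : ContDiff ℝ 2 (dirDeriv v u) := contDiff_dirDeriv hu (by norm_num) v
  have hu₁ (v : ℝ × E) : ContDiff ℝ 1 (dirDeriv v (dirDeriv v u)) :=
    contDiff_dirDeriv (hu₂ v) (by norm_num) v
  have hsum : Differentiable ℝ (∑ i, dirDeriv (0, b i) (dirDeriv (0, b i) u)) := by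
    rw [Finset.sum_fn]
    exact .fun_sum fun i _ => (hu₁ _).differentiable one_ne_zero
  have comm (v : ℝ × E) : dirDeriv w (dirDeriv v u) = dirDeriv v (dirDeriv w u) :=
    dirDeriv_comm (hu.of_le (by norm_num)) w v
  unfold backwardHeatOp
  rw [dirDeriv_add ((hu₂ _).differentiable two_ne_zero) hsum,
    dirDeriv_sum fun i _ => (hu₁ _).differentiable one_ne_zero, comm]
  congr 1
  exact Finset.sum_congr rfl fun i _ => by rw [dirDeriv_comm (hu₂ _), comm]

theorem dirDeriv_backwardHeatOp_sub_smul (hu : ContDiff ℝ 3 u) (lam : ℝ) (w : ℝ × E) :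
    dirDeriv w (backwardHeatOp b u - lam • u) =
      backwardHeatOp b (dirDeriv w u) - lam • dirDeriv w u := by
  have hd : Differentiable ℝ u := hu.differentiable three_ne_zero
  have hLd : Differentiable ℝ (backwardHeatOp b u) :=
    (contDiff_backwardHeatOp (m := 1) b hu (by norm_num)).differentiable one_ne_zero
  rw [dirDeriv_sub hLd (hd.const_smul lam), dirDeriv_backwardHeatOp b hu,
    dirDeriv_const_smul hd]

end BackwardHeatOp

section HeatMean

variable {E : Type*} [NormedAddCommGroup E] [InnerProductSpace ℝ E] {f g : ℝ × E → ℝ}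

/-- The point `(r² / 2, r ξ)`, for `w = (r, ξ)`, of the parabola with direction `ξ`. For a standard
Gaussian `ξ` it is the space-time Brownian motion `(s, √2 B_s)` at time `s = r² / 2`, in law. -/
def parabolicShift (w : ℝ × E) : ℝ × E :=
  (w.1 ^ 2 / 2, w.1 • w.2)

@[fun_prop]
theorem continuous_parabolicShift : Continuous (parabolicShift : ℝ × E → ℝ × E) := by
  unfold parabolicShift
  fun_prop

theorem hasDerivAt_parabolicShift (r : ℝ) (ξ : E) :
    HasDerivAt (fun r => parabolicShift (r, ξ)) (r, ξ) r := by
  have h₁ : HasDerivAt (fun r : ℝ => r ^ 2 / 2) r r := by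
    simpa using (hasDerivAt_pow 2 r).div_const 2
  have h₂ : HasDerivAt (fun r : ℝ => r • ξ) ξ r := by
    simpa using (hasDerivAt_id r).smul_const ξ
  exact h₁.prodMk h₂

theorem hasFDerivAt_comp_parabolicShift (hf : Differentiable ℝ f) (z : ℝ × E) (r : ℝ) (ξ : E) :
    HasFDerivAt (fun ξ => f (z + parabolicShift (r, ξ)))
      (r • (fderiv ℝ f (z + parabolicShift (r, ξ))).comp (.inr ℝ ℝ E)) ξ := by
  have hasFDerivAt_shift : HasFDerivAt (fun ξ => z + parabolicShift (r, ξ))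
      (r • ContinuousLinearMap.inr ℝ ℝ E) ξ :=
    (((hasFDerivAt_const (r ^ 2 / 2) ξ).prodMk ((hasFDerivAt_id ξ).const_smul r)).const_add
      z).congr_fderiv (by ext <;> simp)
  exact ((hf _).hasFDerivAt.comp ξ hasFDerivAt_shift).congr_fderiv (by ext; simp)

variable [FiniteDimensional ℝ E] [MeasurableSpace E] [BorelSpace E]

@[fun_prop]
theorem measurable_parabolicShift : Measurable (parabolicShift : ℝ × E → ℝ × E) :=
  continuous_parabolicShift.measurable

/-- The mean of `f` at the Gaussian random point `z + (r² / 2, r ξ)`; in other words, the heat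
semigroup of `∂ₜ + Δ` at time `r² / 2`, applied to `f`. -/
def heatMean (f : ℝ × E → ℝ) (z : ℝ × E) (r : ℝ) : ℝ :=
  ∫ ξ, f (z + parabolicShift (r, ξ)) ∂stdGaussian E

theorem heatMean_zero_right (f : ℝ × E → ℝ) (z : ℝ × E) : heatMean f z 0 = f z := by
  simp [heatMean, parabolicShift, Prod.mk_zero_zero]

theorem norm_heatMean_le {C : ℝ} (hC : ∀ z, ‖f z‖ ≤ C) (z : ℝ × E) (r : ℝ) :
    ‖heatMean f z r‖ ≤ C := by
  have h := norm_integral_le_of_norm_le_const (μ := stdGaussian E)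
    (.of_forall fun ξ => hC (z + parabolicShift (r, ξ)))
  rwa [probReal_univ, mul_one] at h

theorem integrable_comp_parabolicShift (hf : Continuous f) (hfc : HasCompactSupport f)
    (z : ℝ × E) (r : ℝ) :
    Integrable (fun ξ => f (z + parabolicShift (r, ξ))) (stdGaussian E) := by
  obtain ⟨C, hC⟩ := hf.bounded_above_of_compact_support hfc
  exact .of_bound (by fun_prop) C (.of_forall fun ξ => hC _)

theorem integrable_inner_mul_comp_parabolicShift (hf : Continuous f) (hfc : HasCompactSupport f)
    (z : ℝ × E) (r : ℝ) (v : E) :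
    Integrable (fun ξ => ⟪ξ, v⟫_ℝ * f (z + parabolicShift (r, ξ))) (stdGaussian E) := by
  obtain ⟨C, hC⟩ := hf.bounded_above_of_compact_support hfc
  exact (IsGaussian.integrable_id.inner_const v).mul_bdd (c := C) (by fun_prop)
    (.of_forall fun ξ => hC _)

theorem continuous_heatMean (hf : Continuous f) (hfc : HasCompactSupport f) (z : ℝ × E) :
    Continuous (heatMean f z) := by
  obtain ⟨C, hC⟩ := hf.bounded_above_of_compact_support hfc
  exact continuous_of_dominated (fun r => by fun_prop) (fun r => .of_forall fun ξ => hC _)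
    (integrable_const C) (.of_forall fun ξ => by fun_prop)

theorem heatMean_sub_smul (hf : Continuous f) (hfc : HasCompactSupport f) (hg : Continuous g)
    (hgc : HasCompactSupport g) (lam : ℝ) (z : ℝ × E) (r : ℝ) :
    heatMean (f - lam • g) z r = heatMean f z r - lam * heatMean g z r := by
  simp only [heatMean, Pi.sub_apply, Pi.smul_apply, smul_eq_mul]
  rw [integral_sub (integrable_comp_parabolicShift hf hfc z r)
    ((integrable_comp_parabolicShift hg hgc z r).const_mul lam), integral_const_mul]

theorem mul_heatMean_dirDeriv (hf : ContDiff ℝ 1 f) (hfc : HasCompactSupport f) (v : E)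
    (z : ℝ × E) (r : ℝ) :
    r * heatMean (dirDeriv (0, v) f) z r =
      ∫ ξ, ⟪ξ, v⟫_ℝ * f (z + parabolicShift (r, ξ)) ∂stdGaussian E := by
  have hf' : Continuous (dirDeriv (0, v) f) :=
    (contDiff_dirDeriv (m := 0) hf (by norm_num) _).continuous
  have hasFDerivAt_comp := hasFDerivAt_comp_parabolicShift (hf.differentiable one_ne_zero) z r
  have fderiv_comp (ξ : E) : fderiv ℝ (fun ξ => f (z + parabolicShift (r, ξ))) ξ v =
      r * dirDeriv (0, v) f (z + parabolicShift (r, ξ)) := by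
    rw [(hasFDerivAt_comp ξ).fderiv]
    rfl
  rw [heatMean, ← integral_const_mul]
  simp only [← fderiv_comp]
  refine integral_fderiv_stdGaussian (fun ξ => (hasFDerivAt_comp ξ).differentiableAt)
    (integrable_comp_parabolicShift hf.continuous hfc z r) ?_
    (integrable_inner_mul_comp_parabolicShift hf.continuous hfc z r v)
  simpa only [fderiv_comp] using
    (integrable_comp_parabolicShift hf' (hasCompactSupport_dirDeriv hfc _) z r).const_mul r

theorem hasDerivAt_heatMean_integral_fderiv (hf : ContDiff ℝ 1 f) (hfc : HasCompactSupport f)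
    (z : ℝ × E) (r : ℝ) :
    HasDerivAt (heatMean f z)
      (∫ ξ, fderiv ℝ f (z + parabolicShift (r, ξ)) (r, ξ) ∂stdGaussian E) r := by
  have hf' : Continuous (fderiv ℝ f) := hf.continuous_fderiv one_ne_zero
  obtain ⟨C, hC⟩ := hf.lipschitzWith_of_hasCompactSupport hfc one_ne_zero
  have norm_deriv_le (ξ : E) (s : ℝ) (hs : s ∈ ball r 1) :
      ‖fderiv ℝ f (z + parabolicShift (s, ξ)) (s, ξ)‖ ≤ C * ((|r| + 1) + ‖ξ‖) := by
    refine ContinuousLinearMap.le_of_opNorm_le_of_le _ (norm_fderiv_le_of_lipschitz ℝ hC) ?_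
    have abs_le : |s| ≤ |r| + 1 := by
      linarith [abs_sub_abs_le_abs_sub s r, Real.dist_eq s r ▸ mem_ball.1 hs]
    exact max_le (abs_le.trans (le_add_of_nonneg_right (norm_nonneg ξ)))
      (le_add_of_nonneg_left (by positivity))
  have bound_integrable : Integrable (fun ξ : E => C * ((|r| + 1) + ‖ξ‖)) (stdGaussian E) :=
    ((integrable_const _).add IsGaussian.integrable_id.norm).const_mul C
  have hasDerivAt_comp (ξ : E) (s : ℝ) : HasDerivAt (fun r => f (z + parabolicShift (r, ξ)))
      (fderiv ℝ f (z + parabolicShift (s, ξ)) (s, ξ)) s :=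
    (hf.differentiable one_ne_zero _).hasFDerivAt.comp_hasDerivAt s
      ((hasDerivAt_parabolicShift s ξ).const_add z)
  have deriv_continuous : Continuous fun ξ => fderiv ℝ f (z + parabolicShift (r, ξ)) (r, ξ) :=
    (hf'.comp (by fun_prop)).clm_apply (by fun_prop)
  exact (hasDerivAt_integral_of_dominated_loc_of_deriv_le (ball_mem_nhds r one_pos)
    (.of_forall fun s => (integrable_comp_parabolicShift hf.continuous hfc z s).1)
    (integrable_comp_parabolicShift hf.continuous hfc z r)
    deriv_continuous.aestronglyMeasurable (.of_forall norm_deriv_le) bound_integrable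
    (.of_forall fun ξ s _ => hasDerivAt_comp ξ s)).2

variable {ι : Type*} [Fintype ι] (b : OrthonormalBasis ι ℝ E) {u : ℝ × E → ℝ}

theorem heatMean_backwardHeatOp (hu : ContDiff ℝ 2 u) (huc : HasCompactSupport u) (z : ℝ × E)
    (r : ℝ) :
    heatMean (backwardHeatOp b u) z r = heatMean (dirDeriv (1, 0) u) z r +
      ∑ i, heatMean (dirDeriv (0, b i) (dirDeriv (0, b i) u)) z r := by
  have hu₁ (w : ℝ × E) : ContDiff ℝ 1 (dirDeriv w u) := contDiff_dirDeriv hu (by norm_num) w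
  have integrable_snd (i : ι) := integrable_comp_parabolicShift
    (contDiff_dirDeriv (m := 0) (hu₁ (0, b i)) (by norm_num) (0, b i)).continuous
    (hasCompactSupport_dirDeriv (hasCompactSupport_dirDeriv huc _) _) z r
  simp only [heatMean, backwardHeatOp, Pi.add_apply, Finset.sum_apply]
  rw [integral_add (integrable_comp_parabolicShift (hu₁ _).continuous
    (hasCompactSupport_dirDeriv huc _) z r) (integrable_finsetSum _ fun i _ => integrable_snd i),
    integral_finsetSum _ fun i _ => integrable_snd i]

theorem hasDerivAt_heatMean (hu : ContDiff ℝ 2 u) (huc : HasCompactSupport u) (z : ℝ × E)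
    (r : ℝ) :
    HasDerivAt (heatMean u z) (r * heatMean (backwardHeatOp b u) z r) r := by
  have hu₁ (w : ℝ × E) : ContDiff ℝ 1 (dirDeriv w u) := contDiff_dirDeriv hu (by norm_num) w
  have integrable_time := integrable_comp_parabolicShift (hu₁ (1, 0)).continuous
    (hasCompactSupport_dirDeriv huc _) z r
  have integrable_space (i : ι) := integrable_inner_mul_comp_parabolicShift
    (hu₁ (0, b i)).continuous (hasCompactSupport_dirDeriv huc _) z r (b i)
  have decomp (ξ : E) : ((r, ξ) : ℝ × E) = r • (1, 0) + ∑ i, ⟪ξ, b i⟫_ℝ • (0, b i) := by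
    ext
    · simp [Prod.fst_sum]
    · simp [Prod.snd_sum, real_inner_comm (b _), b.sum_repr' ξ]
  convert hasDerivAt_heatMean_integral_fderiv (hu.of_le one_le_two) huc z r using 1
  symm
  calc ∫ ξ, fderiv ℝ u (z + parabolicShift (r, ξ)) (r, ξ) ∂stdGaussian E
    _ = ∫ ξ, (r * dirDeriv (1, 0) u (z + parabolicShift (r, ξ)) +
          ∑ i, ⟪ξ, b i⟫_ℝ * dirDeriv (0, b i) u (z + parabolicShift (r, ξ))) ∂stdGaussian E := by
        refine integral_congr_ae (.of_forall fun ξ => ?_)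
        simp only [decomp ξ, map_add, map_sum, map_smul, smul_eq_mul, dirDeriv]
    _ = r * heatMean (dirDeriv (1, 0) u) z r +
          ∑ i, ∫ ξ, ⟪ξ, b i⟫_ℝ * dirDeriv (0, b i) u (z + parabolicShift (r, ξ))
            ∂stdGaussian E := by
        rw [integral_add (integrable_time.const_mul r)
          (integrable_finsetSum _ fun i _ => integrable_space i), integral_const_mul,
          integral_finsetSum _ fun i _ => integrable_space i, heatMean]
    _ = r * heatMean (backwardHeatOp b u) z r := by
        rw [heatMean_backwardHeatOp b hu huc, mul_add, Finset.mul_sum]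
        simp only [mul_heatMean_dirDeriv (hu₁ _) (hasCompactSupport_dirDeriv huc _)]

variable {lam : ℝ}

theorem hasDerivAt_exp_mul_heatMean (hu : ContDiff ℝ 2 u) (huc : HasCompactSupport u) (z : ℝ × E)
    (r : ℝ) :
    HasDerivAt (fun r => Real.exp (-(lam / 2) * r ^ 2) * heatMean u z r)
      (r * Real.exp (-(lam / 2) * r ^ 2) * heatMean (backwardHeatOp b u - lam • u) z r) r := by
  have hasDerivAt_exp : HasDerivAt (fun r : ℝ => Real.exp (-(lam / 2) * r ^ 2))
      (Real.exp (-(lam / 2) * r ^ 2) * (-(lam / 2) * (2 * r))) r := by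
    simpa using ((hasDerivAt_pow 2 r).const_mul (-(lam / 2))).exp
  rw [heatMean_sub_smul (contDiff_backwardHeatOp (m := 0) b hu (by norm_num)).continuous
    (hasCompactSupport_backwardHeatOp b huc) hu.continuous huc]
  refine (hasDerivAt_exp.mul (hasDerivAt_heatMean b hu huc z r)).congr_deriv ?_
  ring

theorem integrableOn_mul_exp_mul_heatMean (hlam : 0 < lam) (hf : Continuous f)
    (hfc : HasCompactSupport f) (z : ℝ × E) :
    IntegrableOn (fun r => r * Real.exp (-(lam / 2) * r ^ 2) * heatMean f z r) (Ioi 0) := by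
  obtain ⟨C, hC⟩ := hf.bounded_above_of_compact_support hfc
  exact (integrable_mul_exp_neg_mul_sq (half_pos hlam)).integrableOn.mul_bdd (c := C)
    (continuous_heatMean hf hfc z).aestronglyMeasurable
    (.of_forall fun r => norm_heatMean_le hC z r)

theorem tendsto_exp_mul_heatMean (hlam : 0 < lam) (hf : Continuous f) (hfc : HasCompactSupport f)
    (z : ℝ × E) :
    Tendsto (fun r => Real.exp (-(lam / 2) * r ^ 2) * heatMean f z r) atTop (𝓝 0) := by
  obtain ⟨C, hC⟩ := hf.bounded_above_of_compact_support hfc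
  have tendsto_exp : Tendsto (fun r : ℝ => Real.exp (-(lam / 2) * r ^ 2)) atTop (𝓝 0) :=
    Real.tendsto_exp_atBot.comp
      ((tendsto_pow_atTop two_ne_zero).const_mul_atTop_of_neg (by linarith))
  exact tendsto_exp.zero_mul_isBoundedUnder_le
    (isBoundedUnder_of ⟨C, fun r => norm_heatMean_le hC z r⟩)

theorem eq_neg_integral_heatMean (hlam : 0 < lam) (hu : ContDiff ℝ 2 u)
    (huc : HasCompactSupport u) (z : ℝ × E) :
    u z = -∫ r in Ioi 0, r * Real.exp (-(lam / 2) * r ^ 2) *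
      heatMean (backwardHeatOp b u - lam • u) z r := by
  rw [integral_Ioi_of_hasDerivAt_of_tendsto'
    (fun r _ => hasDerivAt_exp_mul_heatMean b hu huc z r)
    (integrableOn_mul_exp_mul_heatMean hlam
      (contDiff_backwardHeatOp_sub_smul (m := 0) b hu (by norm_num) lam).continuous
      (hasCompactSupport_backwardHeatOp_sub_smul b huc lam) z)
    (tendsto_exp_mul_heatMean hlam hu.continuous huc z)]
  simp [heatMean_zero_right]

theorem dirDeriv_eq_neg_integral (hlam : 0 < lam) (hu : ContDiff ℝ 3 u)
    (huc : HasCompactSupport u) (v : E) (z : ℝ × E) :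
    dirDeriv (0, v) u z = -∫ r in Ioi 0, Real.exp (-(lam / 2) * r ^ 2) *
      ∫ ξ, ⟪ξ, v⟫_ℝ * (backwardHeatOp b u - lam • u) (z + parabolicShift (r, ξ))
        ∂stdGaussian E := by
  rw [eq_neg_integral_heatMean b hlam (contDiff_dirDeriv hu (by norm_num) _)
    (hasCompactSupport_dirDeriv huc _), ← dirDeriv_backwardHeatOp_sub_smul b hu]
  refine congrArg Neg.neg (integral_congr_ae (.of_forall fun r => ?_))
  dsimp only
  rw [← mul_heatMean_dirDeriv (contDiff_backwardHeatOp_sub_smul b hu (by norm_num) lam)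
    (hasCompactSupport_backwardHeatOp_sub_smul b huc lam)]
  ring

end HeatMean

section GradientKernel

variable {E : Type*} [NormedAddCommGroup E] [InnerProductSpace ℝ E] [FiniteDimensional ℝ E]
  [MeasurableSpace E] [BorelSpace E]

/-- The image under `parabolicShift` of the measure `exp (-lam r² / 2) |ξ| dr γ(dξ)` on
`(0, ∞) × E`, where `γ` is the standard Gaussian measure. The spatial gradient of `u` is dominated
by the integral of the translates of `|∂ₜ u + Δ u - lam u|` against it. -/
def gradientKernel (E : Type*) [NormedAddCommGroup E] [InnerProductSpace ℝ E]
    [FiniteDimensional ℝ E] [MeasurableSpace E] [BorelSpace E] (lam : ℝ) : Measure (ℝ × E) :=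
  (((volume.restrict (Ioi 0)).withDensity
      fun r => ENNReal.ofReal (Real.exp (-(lam / 2) * r ^ 2))).prod
    ((stdGaussian E).withDensity fun ξ => ‖ξ‖ₑ)).map parabolicShift

theorem lintegral_gradientKernel {h : ℝ × E → ℝ≥0∞} (hh : Measurable h) (lam : ℝ) :
    ∫⁻ w, h w ∂gradientKernel E lam =
      ∫⁻ r in Ioi 0, ENNReal.ofReal (Real.exp (-(lam / 2) * r ^ 2)) *
        ∫⁻ ξ, ‖ξ‖ₑ * h (parabolicShift (r, ξ)) ∂stdGaussian E := by
  have measurable_inner : Measurable fun r : ℝ =>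
      ∫⁻ ξ, h (parabolicShift (r, ξ)) ∂(stdGaussian E).withDensity fun ξ => ‖ξ‖ₑ :=
    (hh.comp measurable_parabolicShift).lintegral_prod_right'
  rw [gradientKernel, lintegral_map hh measurable_parabolicShift, lintegral_prod _ (by fun_prop),
    lintegral_withDensity_eq_lintegral_mul _ (by fun_prop) measurable_inner]
  refine lintegral_congr fun r => ?_
  rw [Pi.mul_apply]
  congr 1
  exact lintegral_withDensity_eq_lintegral_mul _ (by fun_prop) (by fun_prop)

theorem gradientKernel_univ_le {lam : ℝ} (hlam : 0 < lam) : gradientKernel E lam univ ≤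
    ENNReal.ofReal (√(Real.pi * Module.finrank ℝ E / 2) * (√lam)⁻¹) := by
  have lintegral_exp : ∫⁻ r in Ioi 0, ENNReal.ofReal (Real.exp (-(lam / 2) * r ^ 2)) =
      ENNReal.ofReal (√(Real.pi / (lam / 2)) / 2) := by
    rw [← integral_gaussian_Ioi, ofReal_integral_eq_lintegral_ofReal
      (integrable_exp_neg_mul_sq (half_pos hlam)).integrableOn
      (.of_forall fun r => (Real.exp_pos _).le)]
  have lintegral_norm :
      ∫⁻ ξ : E, ‖ξ‖ₑ ∂stdGaussian E = ENNReal.ofReal (∫ ξ : E, ‖ξ‖ ∂stdGaussian E) :=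
    (ofReal_integral_norm_eq_lintegral_enorm IsGaussian.integrable_id).symm
  have const_eq : √(Real.pi / (lam / 2)) / 2 = √(Real.pi / 2) * (√lam)⁻¹ := by
    rw [← Real.sqrt_inv, ← Real.sqrt_mul (by positivity),
      show Real.pi / (lam / 2) = 2 ^ 2 * (Real.pi / 2 * lam⁻¹) by field_simp,
      Real.sqrt_mul (by positivity), Real.sqrt_sq zero_le_two]
    ring
  calc gradientKernel E lam univ = ∫⁻ _, 1 ∂gradientKernel E lam := lintegral_one.symm
    _ = ENNReal.ofReal (√(Real.pi / 2) * (√lam)⁻¹ * ∫ ξ : E, ‖ξ‖ ∂stdGaussian E) := by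
        simp only [lintegral_gradientKernel measurable_const, mul_one]
        rw [lintegral_mul_const _ (by fun_prop), lintegral_exp, lintegral_norm, const_eq,
          ← ENNReal.ofReal_mul (by positivity)]
    _ ≤ ENNReal.ofReal (√(Real.pi / 2) * (√lam)⁻¹ * √(Module.finrank ℝ E)) := by
        gcongr
        exact integral_norm_stdGaussian_le
    _ = ENNReal.ofReal (√(Real.pi * Module.finrank ℝ E / 2) * (√lam)⁻¹) := by
        rw [mul_right_comm, ← Real.sqrt_mul (by positivity), mul_div_right_comm]

theorem isFiniteMeasure_gradientKernel {lam : ℝ} (hlam : 0 < lam) :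
    IsFiniteMeasure (gradientKernel E lam) :=
  ⟨(gradientKernel_univ_le hlam).trans_lt ENNReal.ofReal_lt_top⟩

theorem enorm_integral_inner_mul_le {f : E → ℝ} {μ : Measure E} (hf : Measurable f) (v : E) :
    ‖∫ ξ, ⟪ξ, v⟫_ℝ * f ξ ∂μ‖ₑ ≤ (∫⁻ ξ, ‖ξ‖ₑ * ‖f ξ‖ₑ ∂μ) * ‖v‖ₑ := by
  have enorm_inner_le (ξ : E) : ‖⟪ξ, v⟫_ℝ‖ₑ ≤ ‖ξ‖ₑ * ‖v‖ₑ := by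
    simpa only [enorm_eq_nnnorm, ← ENNReal.coe_mul, ENNReal.coe_le_coe] using
      nnnorm_inner_le_nnnorm (𝕜 := ℝ) ξ v
  refine (enorm_integral_le_lintegral_enorm _).trans ?_
  rw [← lintegral_mul_const _ (by fun_prop)]
  refine lintegral_mono fun ξ => ?_
  rw [enorm_mul, mul_right_comm]
  gcongr
  exact enorm_inner_le ξ

theorem enorm_integral_exp_mul_integral_inner_mul_le {f : ℝ × E → ℝ} (hf : Measurable f)
    (lam : ℝ) (v : E) :
    ‖∫ r in Ioi 0, Real.exp (-(lam / 2) * r ^ 2) *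
        ∫ ξ, ⟪ξ, v⟫_ℝ * f (parabolicShift (r, ξ)) ∂stdGaussian E‖ₑ ≤
      (∫⁻ w, ‖f w‖ₑ ∂gradientKernel E lam) * ‖v‖ₑ := by
  have : Measurable fun r : ℝ =>
      ∫⁻ ξ, ‖ξ‖ₑ * ‖f (parabolicShift (r, ξ))‖ₑ ∂stdGaussian E :=
    Measurable.lintegral_prod_right' (f := fun w : ℝ × E => ‖w.2‖ₑ * ‖f (parabolicShift w)‖ₑ)
      (by fun_prop)
  rw [lintegral_gradientKernel hf.enorm, ← lintegral_mul_const _ (by fun_prop)]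
  refine (enorm_integral_le_lintegral_enorm _).trans (lintegral_mono fun r => ?_)
  rw [enorm_mul, Real.enorm_eq_ofReal (Real.exp_pos _).le, mul_assoc]
  gcongr
  exact enorm_integral_inner_mul_le (f := fun ξ => f (parabolicShift (r, ξ))) (by fun_prop) v

theorem enorm_fderiv_comp_inr_le {ι : Type*} [Fintype ι] (b : OrthonormalBasis ι ℝ E) {lam : ℝ}
    (hlam : 0 < lam) {u : ℝ × E → ℝ} (hu : ContDiff ℝ 3 u) (huc : HasCompactSupport u)
    (z : ℝ × E) :
    ‖(fderiv ℝ u z).comp (.inr ℝ ℝ E)‖ₑ ≤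
      ∫⁻ w, ‖(backwardHeatOp b u - lam • u) (z + w)‖ₑ ∂gradientKernel E lam := by
  have hL : Continuous (backwardHeatOp b u - lam • u) :=
    (contDiff_backwardHeatOp_sub_smul (m := 1) b hu (by norm_num) lam).continuous
  refine ContinuousLinearMap.opENorm_le_bound _ fun v => ?_
  change ‖dirDeriv (0, v) u z‖ₑ ≤ _
  rw [dirDeriv_eq_neg_integral b hlam hu huc, enorm_neg]
  exact enorm_integral_exp_mul_integral_inner_mul_le
    (hL.comp (continuous_const_add z)).measurable lam v

end GradientKernel

section Coordinates

variable {d : ℕ} {u : Pt d → ℝ}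

theorem Dt_eq_dirDeriv (hu : Differentiable ℝ u) : Dt u = dirDeriv (1, 0) u := by
  funext z
  exact ((hu z).hasFDerivAt.comp_hasDerivAt z.1
    ((hasDerivAt_id z.1).prodMk (hasDerivAt_const z.1 z.2))).deriv

theorem Dx_eq_dirDeriv (hu : Differentiable ℝ u) (i : Fin d) :
    Dx i u = dirDeriv (0, EuclideanSpace.single i 1) u := by
  funext z
  have h : HasFDerivAt (fun y => u (z.1, y)) ((fderiv ℝ u z).comp (.inr ℝ ℝ (Spc d))) z.2 :=
    (hu z).hasFDerivAt.comp z.2 (hasFDerivAt_prodMk_right z.1 z.2)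
  rw [Dx, h.fderiv]
  rfl

theorem Dt_add_sum_Dxx_sub_eq_backwardHeatOp_sub_smul (hu : ContDiff ℝ 2 u) (lam : ℝ) :
    (fun z => Dt u z + (∑ i, Dxx i i u z) - lam * u z) =
      backwardHeatOp (EuclideanSpace.basisFun (Fin d) ℝ) u - lam • u := by
  have hd : Differentiable ℝ u := hu.differentiable two_ne_zero
  have hd₁ (w : Pt d) : Differentiable ℝ (dirDeriv w u) :=
    (contDiff_dirDeriv (m := 1) hu (by norm_num) w).differentiable one_ne_zero
  funext z
  simp [backwardHeatOp, Dxx, Dt_eq_dirDeriv hd, Dx_eq_dirDeriv hd, Dx_eq_dirDeriv (hd₁ _)]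

theorem vnorm_apply_single (L : Spc d →L[ℝ] ℝ) :
    vnorm (fun i => L (EuclideanSpace.single i 1)) = ‖L‖ := by
  obtain ⟨w, rfl⟩ := (InnerProductSpace.toDual ℝ (Spc d)).surjective L
  simp [vnorm, EuclideanSpace.norm_eq, EuclideanSpace.inner_single_right]

theorem vnorm_Dx_eq_norm_fderiv_comp_inr (hu : Differentiable ℝ u) :
    (fun z => vnorm fun i => Dx i u z) = fun z => ‖(fderiv ℝ u z).comp (.inr ℝ ℝ (Spc d))‖ := by
  funext z
  rw [← vnorm_apply_single]
  simp [Dx_eq_dirDeriv hu, dirDeriv]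

end Coordinates

theorem stmt8_general {d : ℕ} {p q : ℝ} (hp : 1 ≤ p) (hq : 1 ≤ q) {u : Pt d → ℝ}
    (hu : ContDiff ℝ 3 u) (huc : HasCompactSupport u) {lam : ℝ} (hlam : 0 < lam) :
    mixedNorm q p (fun z => vnorm fun i => Dx i u z) ≤
      √(Real.pi * d / 2) * (√lam)⁻¹ *
        mixedNorm q p (fun z => Dt u z + (∑ i, Dxx i i u z) - lam * u z) := by
  have hp0 : 0 < p := by linarith
  have hq0 : 0 < q := by linarith
  let b := EuclideanSpace.basisFun (Fin d) ℝ
  rw [vnorm_Dx_eq_norm_fderiv_comp_inr (hu.differentiable three_ne_zero),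
    Dt_add_sum_Dxx_sub_eq_backwardHeatOp_sub_smul (hu.of_le (by norm_num))]
  have hL : Continuous (backwardHeatOp b u - lam • u) :=
    (contDiff_backwardHeatOp_sub_smul (m := 1) b hu (by norm_num) lam).continuous
  have hLc := hasCompactSupport_backwardHeatOp_sub_smul b huc lam
  have hG := continuous_norm_fderiv_comp_inr (hu.of_le (m := 1) (by norm_num))
  have hGc := hasCompactSupport_norm_fderiv_comp_inr huc
  have := isFiniteMeasure_gradientKernel (E := Spc d) hlam
  rw [← ENNReal.ofReal_le_ofReal_iff
    (mul_nonneg (by positivity) (mixedNorm_nonneg q p _)), ENNReal.ofReal_mul (by positivity),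
    ofReal_mixedNorm hG hGc hq0 hp0, ofReal_mixedNorm hL hLc hq0 hp0]
  simp only [enorm_norm]
  calc eMixedNorm volume volume q p (fun z => ‖(fderiv ℝ u z).comp (.inr ℝ ℝ (Spc d))‖ₑ)
    _ ≤ gradientKernel (Spc d) lam univ *
          eMixedNorm volume volume q p (fun z => ‖(backwardHeatOp b u - lam • u) z‖ₑ) :=
        eMixedNorm_le_of_le_lintegral_translate hq hp (by fun_prop)
          (enorm_fderiv_comp_inr_le b hlam hu huc)
    _ ≤ _ := by
        gcongr
        simpa using gradientKernel_univ_le (E := Spc d) hlam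

theorem stmt8 (d : ℕ) (hd : 1 ≤ d) :
    ∃ N : ℝ, 0 < N ∧ ∀ p q : ℝ, 1 < p → 1 < q →
      ∀ u : Pt d → ℝ, CinfC u → ∀ lam : ℝ, 0 < lam →
        mixedNorm q p (fun z => vnorm fun i => Dx i u z) ≤
          N * (Real.sqrt lam)⁻¹ *
            mixedNorm q p (fun z => Dt u z + (∑ i, Dxx i i u z) - lam * u z) :=
  ⟨√(Real.pi * d / 2), by positivity, fun _ _ hp hq _ hu _ hlam =>
    stmt8_general hp.le hq.le (contDiff_infty.1 hu.1 3) hu.2 hlam⟩
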